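/- Let J₁⁻ denote the set of jobs in J⁻ that are the first job ever assigned to their respective bucket of table T⁻. There is an absolute constant c such that ∑_{j∈J₁⁻} α_j⁻ ≤ c·ε·(∑_{j∈J} w_j·p_j + ∑_{j∈J} α_j⁺). -/

import Mathlib

/-!
Write `W j` for the remaining weight, on the arrival of `j`, of the active jobs of smaller density
class, so that `α_j⁻ = p_j W j`. Membership in `J⁻` says `p_j < ε (W j) / ρ_j`.

* Fix a density class `i` and let `M` bound `W j` over the first jobs of class `i`. Such a job is
  determined by `(⌊α_j⁻⌋₂, ⌊p_j⌋₂)`. Since `α_j⁻ ≤ p_j M` and `p_j ≤ ε M / 2^i`, summing two geometric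
  series gives `∑ α_j⁻ ≤ 16 ε M² / 2^i` (`sum_class_le`).
* `M` is attained at some job, hence is a sum over classes `i' < i` of the remaining weights `V i'` of
  class `i'` at a common time. Any two jobs of class `i'` active at this time were both active when
  the later one arrived, so they contribute to its `α⁺`; hence `(V i')² ≤ 8 · 2^i' · B i'`, where `B i'`
  is the sum of `w p + α⁺` over class `i'` (`V_sq_le`).
* Cauchy-Schwarz with weights `(2/3)^(i-i')` gives `M² / 2^i ≤ 16 ∑_{i' < i} (3/4)^(i-i') B i'`
  (`W_sq_le`), and summing over `i` costs another geometric factor `3`.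

The argument uses nothing about the schedule besides the monotonicity of remaining sizes.
-/

open Finset
open scoped Classical

noncomputable section

namespace NPSched

/-- The density `ρ_j = w_j / p_j` of job `j`. -/
def den (p : ℕ → ℕ) (w : ℕ → ℝ) (j : ℕ) : ℝ := w j / p j

/-- The density class `⌊ρ_j⌋₂` of job `j`: the largest integer `i` with `2 ^ i ≤ ρ_j`. -/
def cls (p : ℕ → ℕ) (w : ℕ → ℝ) (j : ℕ) : ℤ := Int.log 2 (den p w j)

/-- Remaining size `p_j(t)` of job `j` at integer time `t` under schedule `sched`,
where `sched t` is the job (if any) processed during the slot `[t, t+1]`. -/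
def rem (p : ℕ → ℕ) (sched : ℕ → Option ℕ) (j t : ℕ) : ℕ :=
  p j - ((Finset.range t).filter fun t' => sched t' = some j).card

/-- Remaining weight `w_j(t) = ρ_j · p_j(t)`. -/
def wrem (p : ℕ → ℕ) (w : ℕ → ℝ) (sched : ℕ → Option ℕ) (j t : ℕ) : ℝ :=
  den p w j * rem p sched j t

/-- Fractional weighted flow time `∑_{t ≥ r_j} w_j(t)` of job `j`. -/
def fracFlow (r p : ℕ → ℕ) (w : ℕ → ℝ) (sched : ℕ → Option ℕ) (j : ℕ) : ℝ :=
  ∑' t : ℕ, if r j ≤ t then wrem p w sched j t else 0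

/-- `s` is the first time at which job `j` is ever processed. -/
def isStart (sched : ℕ → Option ℕ) (j s : ℕ) : Prop :=
  sched s = some j ∧ ∀ s' < s, sched s' ≠ some j

/-- Active jobs `A(t)`: released by `t`, not immediately rejected, not yet finished. -/
def activeAt (J : Finset ℕ) (r p : ℕ → ℕ) (sched : ℕ → Option ℕ) (Jimm : Finset ℕ)
    (t : ℕ) : Finset ℕ :=
  J.filter fun j => r j ≤ t ∧ j ∉ Jimm ∧ 0 < rem p sched j t

/-- The set `A(r_j)` of active jobs present when `j` arrives: jobs released strictly
earlier, or simultaneously but earlier in the fixed (index) order, that are neither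
rejected nor finished.  (`j` itself is excluded.) -/
def arrSet (J : Finset ℕ) (r p : ℕ → ℕ) (sched : ℕ → Option ℕ) (Jimm : Finset ℕ)
    (j : ℕ) : Finset ℕ :=
  J.filter fun j' =>
    (r j' < r j ∨ (r j' = r j ∧ j' < j)) ∧ j' ∉ Jimm ∧ 0 < rem p sched j' (r j)

/-- `α_j`: the increase of total fractional weighted flow time caused by the arrival
of `j`, had HDF been run on `A(r_j) ∪ {j}` from time `r_j` on. -/
def alpha (J : Finset ℕ) (r p : ℕ → ℕ) (w : ℕ → ℝ) (sched : ℕ → Option ℕ)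
    (Jimm : Finset ℕ) (j : ℕ) : ℝ :=
  w j * ∑ j' ∈ (arrSet J r p sched Jimm j).filter (fun j' => den p w j ≤ den p w j'),
      (rem p sched j' (r j) : ℝ)
    + w j * p j / 2
    + p j * ∑ j' ∈ (arrSet J r p sched Jimm j).filter (fun j' => den p w j' < den p w j),
        wrem p w sched j' (r j)

/-- `α_j⁺`: the part of (the two sums of) `α_j` coming from jobs of density class
at least `⌊ρ_j⌋₂`. -/
def alphaPlus (J : Finset ℕ) (r p : ℕ → ℕ) (w : ℕ → ℝ) (sched : ℕ → Option ℕ)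
    (Jimm : Finset ℕ) (j : ℕ) : ℝ :=
  w j * ∑ j' ∈ (arrSet J r p sched Jimm j).filter
      (fun j' => cls p w j ≤ cls p w j' ∧ den p w j ≤ den p w j'),
      (rem p sched j' (r j) : ℝ)
    + p j * ∑ j' ∈ (arrSet J r p sched Jimm j).filter
        (fun j' => cls p w j ≤ cls p w j' ∧ den p w j' < den p w j),
        wrem p w sched j' (r j)

/-- `α_j⁻`: the contribution to `α_j` of jobs of density class strictly less
than `⌊ρ_j⌋₂`. -/
def alphaMinus (J : Finset ℕ) (r p : ℕ → ℕ) (w : ℕ → ℝ) (sched : ℕ → Option ℕ)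
    (Jimm : Finset ℕ) (j : ℕ) : ℝ :=
  p j * ∑ j' ∈ (arrSet J r p sched Jimm j).filter (fun j' => cls p w j' < cls p w j),
      wrem p w sched j' (r j)

/-- The set `J⁺` of jobs assigned to table `T⁺`. -/
def Jplus (J : Finset ℕ) (r p : ℕ → ℕ) (w : ℕ → ℝ) (sched : ℕ → Option ℕ)
    (Jimm : Finset ℕ) (ε : ℝ) : Finset ℕ :=
  J.filter fun j => w j * p j / ε ≤ alphaPlus J r p w sched Jimm j

/-- The set `J⁻` of jobs assigned to table `T⁻`. -/
def Jminus (J : Finset ℕ) (r p : ℕ → ℕ) (w : ℕ → ℝ) (sched : ℕ → Option ℕ)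
    (Jimm : Finset ℕ) (ε : ℝ) : Finset ℕ :=
  J.filter fun j => w j * p j / ε < alphaMinus J r p w sched Jimm j

/-- The bucket `(⌊α_j⁺/w_j⌋₂, ⌊w_j⌋₂)` of table `T⁺` to which a job of `J⁺` is assigned. -/
def bucketPlus (J : Finset ℕ) (r p : ℕ → ℕ) (w : ℕ → ℝ) (sched : ℕ → Option ℕ)
    (Jimm : Finset ℕ) (j : ℕ) : ℤ × ℤ :=
  (Int.log 2 (alphaPlus J r p w sched Jimm j / w j), Int.log 2 (w j))

/-- The bucket `(⌊α_j⁻⌋₂, ⌊ρ_j⌋₂, ⌊p_j⌋₂)` of table `T⁻` to which a job of `J⁻` is assigned. -/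
def bucketMinus (J : Finset ℕ) (r p : ℕ → ℕ) (w : ℕ → ℝ) (sched : ℕ → Option ℕ)
    (Jimm : Finset ℕ) (j : ℕ) : ℤ × ℤ × ℤ :=
  (Int.log 2 (alphaMinus J r p w sched Jimm j), cls p w j, Int.log 2 ((p j : ℝ)))

/-- `j'` arrives no later than `j` (simultaneous arrivals ordered by index). -/
def arrLE (r : ℕ → ℕ) (j' j : ℕ) : Prop :=
  r j' < r j ∨ (r j' = r j ∧ j' ≤ j)

/-- The (1-based) position of `j` in the arrival order of its bucket of `T⁺`. -/
def rankPlus (J : Finset ℕ) (r p : ℕ → ℕ) (w : ℕ → ℝ) (sched : ℕ → Option ℕ)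
    (Jimm : Finset ℕ) (ε : ℝ) (j : ℕ) : ℕ :=
  ((Jplus J r p w sched Jimm ε).filter fun j' =>
    bucketPlus J r p w sched Jimm j' = bucketPlus J r p w sched Jimm j ∧ arrLE r j' j).card

/-- The (1-based) position of `j` in the arrival order of its bucket of `T⁻`. -/
def rankMinus (J : Finset ℕ) (r p : ℕ → ℕ) (w : ℕ → ℝ) (sched : ℕ → Option ℕ)
    (Jimm : Finset ℕ) (ε : ℝ) (j : ℕ) : ℕ :=
  ((Jminus J r p w sched Jimm ε).filter fun j' =>
    bucketMinus J r p w sched Jimm j' = bucketMinus J r p w sched Jimm j ∧ arrLE r j' j).card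

/-- An execution of algorithm `A` on a job instance `(J, r, p, w)` with parameter
`ε` (where `k = 1/ε` is a positive integer): the data consists of the schedule
(`sched t` is the job processed in slot `[t, t+1]`), the set `Jimm` of immediately
rejected jobs, and the growing set `L t` of preemptible jobs; the fields below
axiomatise exactly the rules of algorithm `A`. -/
structure AlgA where
  /-- the (finite) set of jobs -/
  J : Finset ℕ
  /-- release times -/
  r : ℕ → ℕ
  /-- sizes -/
  p : ℕ → ℕ
  /-- weights -/
  w : ℕ → ℝ
  /-- the parameter ε -/
  ε : ℝ
  /-- `k = 1/ε`, a positive integer -/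
  k : ℕ
  /-- the schedule produced by algorithm `A` -/
  sched : ℕ → Option ℕ
  /-- the set `J^imm` of immediately rejected jobs -/
  Jimm : Finset ℕ
  /-- `L t` : the set of preemptible jobs at time `t` -/
  L : ℕ → Finset ℕ
  hp : ∀ j ∈ J, 0 < p j
  hw : ∀ j ∈ J, 0 < w j
  hε : 0 < ε
  hε2 : ε ^ 2 ≤ 1 / 2
  hk : (k : ℝ) = 1 / ε
  /-- immediate rejections: in each bucket of `T⁺` the first job and every
  `(1/ε)`-th job thereafter (positions `1, 1 + k, 1 + 2k, …`), and in each bucket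
  of `T⁻` every `(1/ε)`-th job (positions `k, 2k, …`), are rejected on arrival. -/
  hJimm : ∀ j, j ∈ Jimm ↔ j ∈ J ∧
    ((j ∈ Jplus J r p w sched Jimm ε ∧ rankPlus J r p w sched Jimm ε j % k = 1 % k) ∨
     (j ∈ Jminus J r p w sched Jimm ε ∧ rankMinus J r p w sched Jimm ε j % k = 0))
  hL0 : L 0 = ∅
  /-- a job enters `L` when the weight released since it started processing
  exceeds `w_j / ε`; once in `L` it stays in `L`. -/
  hLsucc : ∀ t j, j ∈ L (t + 1) ↔ j ∈ L t ∨
    (sched t = some j ∧ ∃ s, isStart sched j s ∧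
      w j / ε < ∑ j' ∈ J.filter (fun j' => s < r j' ∧ r j' ≤ t + 1), w j')
  /-- only active jobs are processed -/
  hvalid : ∀ t j, sched t = some j → j ∈ activeAt J r p sched Jimm t
  /-- a running job that is unfinished and not preemptible keeps running -/
  hcont : ∀ t j, sched t = some j → 0 < rem p sched j (t + 1) → j ∉ L (t + 1) →
    sched (t + 1) = some j
  /-- initially, a highest-density active job is processed (if any job is active) -/
  hHDF0 : (activeAt J r p sched Jimm 0 = ∅ ∧ sched 0 = none) ∨
    ∃ j, sched 0 = some j ∧ ∀ j' ∈ activeAt J r p sched Jimm 0, den p w j' ≤ den p w j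
  /-- whenever the previous job has finished or become preemptible (or no job was
  running), a highest-density active job is processed (if any job is active) -/
  hHDFsucc : ∀ t, (∀ j, sched t = some j → rem p sched j (t + 1) = 0 ∨ j ∈ L (t + 1)) →
    (activeAt J r p sched Jimm (t + 1) = ∅ ∧ sched (t + 1) = none) ∨
    ∃ j, sched (t + 1) = some j ∧
      ∀ j' ∈ activeAt J r p sched Jimm (t + 1), den p w j' ≤ den p w j
  /-- every job that is not immediately rejected is eventually finished by `A` -/
  hdone : ∀ j ∈ J, j ∉ Jimm → ∃ T, rem p sched j T = 0

/-! ### Geometric series and pair sums -/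

/-- A geometric series with distinct integer exponents, all at least `b`. -/
lemma geom_sum_le {ι : Type*} (S : Finset ι) (g : ι → ℤ) (hg : Set.InjOn g S) {x : ℝ}
    (hx0 : 0 < x) (hx1 : x < 1) (b : ℤ) (hb : ∀ s ∈ S, b ≤ g s) :
    ∑ s ∈ S, x ^ g s ≤ x ^ b * (1 - x)⁻¹ := by
  have h1 : ∑ s ∈ S, x ^ g s = x ^ b * ∑ s ∈ S, x ^ (g s - b).toNat := by
    rw [Finset.mul_sum]
    refine Finset.sum_congr rfl fun s hs => ?_
    have : g s = b + ((g s - b).toNat : ℤ) := by have := hb s hs; omega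
    conv_lhs => rw [this, zpow_add₀ hx0.ne', zpow_natCast]
  have h2 : ∑ s ∈ S, x ^ (g s - b).toNat = ∑ n ∈ S.image (fun s => (g s - b).toNat), x ^ n := by
    rw [Finset.sum_image]
    intro s hs t ht h
    apply hg hs ht
    have := hb s hs
    have := hb t ht
    simp only at h
    omega
  rw [h1, h2]
  gcongr
  rw [← tsum_geometric_of_lt_one hx0.le hx1]
  exact (summable_geometric_of_lt_one hx0.le hx1).sum_le_tsum _ fun _ _ => by positivity

/-- A geometric series of powers of two with distinct integer exponents, all at most `b`. -/
lemma two_zpow_sum_le {ι : Type*} (S : Finset ι) (g : ι → ℤ) (hg : Set.InjOn g S)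
    (b : ℤ) (hb : ∀ s ∈ S, g s ≤ b) :
    ∑ s ∈ S, (2 : ℝ) ^ g s ≤ 2 * 2 ^ b := by
  have h := geom_sum_le S (fun s => -g s) (fun s hs t ht h => hg hs ht (by simpa using h))
    (x := 1 / 2) (by norm_num) (by norm_num) (-b) (fun s hs => by simpa using hb s hs)
  simp only [one_div, inv_zpow', neg_neg] at h
  norm_num at h
  linarith

lemma rem_anti (p : ℕ → ℕ) (sched : ℕ → Option ℕ) (j : ℕ) {s t : ℕ} (h : s ≤ t) :
    rem p sched j t ≤ rem p sched j s := by
  unfold rem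
  apply Nat.sub_le_sub_left
  apply Finset.card_le_card
  apply Finset.filter_subset_filter
  exact Finset.range_mono h

lemma rem_le (p : ℕ → ℕ) (sched : ℕ → Option ℕ) (j t : ℕ) : rem p sched j t ≤ p j :=
  Nat.sub_le _ _

/-- For a total relation `R`, the sum of `y i * y j` over the pairs with `R i j` is at least half
of `(∑ y)²`, since every pair is counted in at least one of its two orders. -/
lemma sq_sum_le_two_mul {ι : Type*} (S : Finset ι) (y : ι → ℝ) (hy : ∀ i ∈ S, 0 ≤ y i)
    (R : ι → ι → Prop) (hR : ∀ i ∈ S, ∀ j ∈ S, R i j ∨ R j i) :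
    (∑ i ∈ S, y i) ^ 2 ≤ 2 * ∑ j ∈ S, ∑ i ∈ S.filter (fun i => R i j), y j * y i := by
  have e : ∀ j, ∑ i ∈ S.filter (fun i => R i j), y j * y i
      = ∑ i ∈ S, if R i j then y j * y i else 0 := fun j => Finset.sum_filter _ _
  simp only [e]
  rw [two_mul]
  -- swap one of the two copies, so that each pair of indices is counted in both orders
  conv_rhs => enter [2]; rw [Finset.sum_comm]
  rw [← Finset.sum_add_distrib, sq, Finset.sum_mul_sum]
  refine Finset.sum_le_sum fun i hi => ?_
  rw [← Finset.sum_add_distrib]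
  refine Finset.sum_le_sum fun j hj => ?_
  have h0 : 0 ≤ y i * y j := mul_nonneg (hy i hi) (hy j hj)
  have h1 : y j * y i = y i * y j := mul_comm _ _
  rw [h1]
  rcases hR i hi j hj with h | h <;> rw [if_pos h] <;> split_ifs <;> linarith

/-! ### Weights of density classes -/

section

variable (A : AlgA)

/-- Remaining weight, on the arrival of `j`, of the active jobs of density class `i`. -/
def V (i : ℤ) (j : ℕ) : ℝ :=
  ∑ j' ∈ (arrSet A.J A.r A.p A.sched A.Jimm j).filter (fun j' => cls A.p A.w j' = i),
    wrem A.p A.w A.sched j' (A.r j)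

/-- Remaining weight, on the arrival of `j`, of the active jobs of class below that of `j`. -/
def W (j : ℕ) : ℝ :=
  ∑ j' ∈ (arrSet A.J A.r A.p A.sched A.Jimm j).filter
    (fun j' => cls A.p A.w j' < cls A.p A.w j), wrem A.p A.w A.sched j' (A.r j)

/-- The part of `∑ (w_j p_j + α_j⁺)` coming from the jobs of density class `i`. -/
def B (i : ℤ) : ℝ :=
  ∑ j ∈ A.J.filter (fun j => cls A.p A.w j = i),
    (A.w j * A.p j + alphaPlus A.J A.r A.p A.w A.sched A.Jimm j)

lemma den_pos {j : ℕ} (hj : j ∈ A.J) : 0 < den A.p A.w j :=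
  div_pos (A.hw j hj) (Nat.cast_pos.2 (A.hp j hj))

lemma two_zpow_cls_le {j : ℕ} (hj : j ∈ A.J) : (2 : ℝ) ^ cls A.p A.w j ≤ den A.p A.w j := by
  have := Int.zpow_log_le_self (b := 2) (by norm_num) (den_pos A hj)
  simpa [cls] using this

lemma den_lt_two_zpow {j : ℕ} : den A.p A.w j < 2 * (2 : ℝ) ^ cls A.p A.w j := by
  have := Int.lt_zpow_succ_log_self (b := 2) (by norm_num) (den A.p A.w j)
  rw [zpow_add_one₀ (by norm_num)] at this
  simp only [Nat.cast_ofNat] at this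
  unfold cls
  linarith

lemma den_mul_p {j : ℕ} (hj : j ∈ A.J) : den A.p A.w j * A.p j = A.w j :=
  div_mul_cancel₀ _ (Nat.cast_pos.2 (A.hp j hj)).ne'

lemma arrSet_subset (j : ℕ) : arrSet A.J A.r A.p A.sched A.Jimm j ⊆ A.J :=
  Finset.filter_subset _ _

lemma wrem_nonneg {j : ℕ} (hj : j ∈ A.J) (t : ℕ) : 0 ≤ wrem A.p A.w A.sched j t :=
  mul_nonneg (den_pos A hj).le (Nat.cast_nonneg _)

/-! ### Bounding the weight of a class by `α⁺` -/

/-- All jobs of class `cls j` active on the arrival of `j` contribute to `α_j⁺`. -/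
lemma alphaPlus_ge {j : ℕ} (hj : j ∈ A.J) :
    2 ^ cls A.p A.w j * ∑ j' ∈ (arrSet A.J A.r A.p A.sched A.Jimm j).filter
      (fun j' => cls A.p A.w j' = cls A.p A.w j), (A.p j : ℝ) * rem A.p A.sched j' (A.r j)
    ≤ alphaPlus A.J A.r A.p A.w A.sched A.Jimm j := by
  unfold alphaPlus
  rw [Finset.mul_sum, Finset.mul_sum, Finset.mul_sum]
  simp only [Finset.sum_filter]
  rw [← Finset.sum_add_distrib]
  refine Finset.sum_le_sum fun j' hj' => ?_
  have hJ := arrSet_subset A j hj'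
  have hw := (A.hw j hj).le
  have hwr := wrem_nonneg A hJ (A.r j)
  have hd := two_zpow_cls_le A hj
  have hd' := two_zpow_cls_le A hJ
  have hm := den_mul_p A hj
  -- compare term by term: a job of the same class occurs in exactly one of the two sums of `α_j⁺`
  by_cases hc : cls A.p A.w j' = cls A.p A.w j
  · rw [if_pos hc]
    by_cases hden : den A.p A.w j ≤ den A.p A.w j'
    · rw [if_pos ⟨hc.ge, hden⟩, if_neg (fun h => absurd h.2 (not_lt.2 hden)), add_zero, ← hm,
        ← mul_assoc]
      gcongr
    · rw [if_neg (fun h => hden h.2), if_pos ⟨hc.ge, not_le.1 hden⟩, zero_add]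
      rw [hc] at hd'
      unfold wrem
      calc _ = (A.p j : ℝ) * (2 ^ cls A.p A.w j * rem A.p A.sched j' (A.r j)) := by ring
        _ ≤ _ := by gcongr
  · rw [if_neg hc]
    split_ifs <;> positivity

lemma alphaPlus_nonneg {j : ℕ} (hj : j ∈ A.J) :
    0 ≤ alphaPlus A.J A.r A.p A.w A.sched A.Jimm j :=
  le_trans (by positivity) (alphaPlus_ge A hj)

lemma B_nonneg (i : ℤ) : 0 ≤ B A i := by
  refine Finset.sum_nonneg fun j hj => ?_
  have hJ := (Finset.mem_filter.1 hj).1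
  have := (A.hw j hJ).le
  have := alphaPlus_nonneg A hJ
  positivity

/-- The remaining weight of a class at one time is controlled by the pairwise interactions of its
jobs, which are paid for by `w p` (diagonal) and by `α⁺` of the later job of each pair. -/
lemma V_sq_le (i : ℤ) (j₀ : ℕ) : V A i j₀ ^ 2 ≤ 8 * 2 ^ i * B A i := by
  set S := (arrSet A.J A.r A.p A.sched A.Jimm j₀).filter (fun j' => cls A.p A.w j' = i) with hS
  set y : ℕ → ℝ := fun j => rem A.p A.sched j (A.r j₀) with hy
  have hSJ : ∀ j ∈ S, j ∈ A.J := fun j hj => arrSet_subset A j₀ (Finset.mem_filter.1 hj).1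
  have hSc : ∀ j ∈ S, cls A.p A.w j = i := fun j hj => (Finset.mem_filter.1 hj).2
  have h2 : (0 : ℝ) < 2 ^ i := by positivity
  have hV0 : 0 ≤ V A i j₀ := Finset.sum_nonneg fun j hj => wrem_nonneg A (hSJ j hj) _
  have hV : V A i j₀ ≤ 2 * 2 ^ i * ∑ j ∈ S, y j := by
    rw [Finset.mul_sum]
    refine Finset.sum_le_sum fun j hj => ?_
    have := (den_lt_two_zpow A (j := j)).le
    rw [hSc j hj] at this
    unfold wrem
    gcongr
  have hpair := sq_sum_le_two_mul S y (fun _ _ => Nat.cast_nonneg _) (arrLE A.r)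
    (fun a _ b _ => by unfold arrLE; omega)
  have hB : 2 ^ i * ∑ j ∈ S, ∑ j' ∈ S.filter (fun j' => arrLE A.r j' j), y j * y j' ≤ B A i := by
    have hsub : S ⊆ A.J.filter (fun j => cls A.p A.w j = i) := fun j hj =>
      Finset.mem_filter.2 ⟨hSJ j hj, hSc j hj⟩
    refine le_trans ?_ (Finset.sum_le_sum_of_subset_of_nonneg hsub fun j hj _ => ?_)
    · rw [Finset.mul_sum]
      refine Finset.sum_le_sum fun j hj => ?_
      have hjJ := hSJ j hj
      have hself : j ∈ S.filter (fun j' => arrLE A.r j' j) :=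
        Finset.mem_filter.2 ⟨hj, Or.inr ⟨rfl, le_rfl⟩⟩
      rw [← Finset.add_sum_erase _ _ hself, mul_add]
      have hyp : y j ≤ A.p j := Nat.cast_le.2 (rem_le _ _ _ _)
      have hy0 : 0 ≤ y j := Nat.cast_nonneg _
      have hd := two_zpow_cls_le A hjJ
      rw [hSc j hj] at hd
      have hd0 := den_pos A hjJ
      apply add_le_add
      · rw [← den_mul_p A hjJ, ← mul_assoc]
        gcongr
      · refine le_trans ?_ (alphaPlus_ge A hjJ)
        rw [hSc j hj]
        gcongr
        refine le_trans (Finset.sum_le_sum_of_subset_of_nonneg (t :=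
          (arrSet A.J A.r A.p A.sched A.Jimm j).filter (fun j' => cls A.p A.w j' = i))
          ?_ fun _ _ _ => by positivity) (Finset.sum_le_sum fun j' hj' => ?_)
        · intro j' hj'
          obtain ⟨hne, hj'⟩ := Finset.mem_erase.1 hj'
          obtain ⟨hj'S, hle⟩ := Finset.mem_filter.1 hj'
          have ha := (Finset.mem_filter.1 (Finset.mem_filter.1 hj'S).1).2
          have hb := (Finset.mem_filter.1 (Finset.mem_filter.1 hj).1).2
          have hr : A.r j ≤ A.r j₀ := by omega
          -- `j'` is still unfinished at time `r j₀ ≥ r j`, hence also when `j` arrives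
          refine Finset.mem_filter.2 ⟨Finset.mem_filter.2 ⟨hSJ j' hj'S, ?_, ha.2.1, ?_⟩, hSc j' hj'S⟩
          · unfold arrLE at hle; omega
          · exact lt_of_lt_of_le ha.2.2 (rem_anti _ _ _ hr)
        · have hb := (Finset.mem_filter.1 (Finset.mem_filter.1 hj).1).2
          have hr : A.r j ≤ A.r j₀ := by omega
          have : y j' ≤ rem A.p A.sched j' (A.r j) := Nat.cast_le.2 (rem_anti _ _ _ hr)
          gcongr
    · have hJ := (Finset.mem_filter.1 hj).1
      have := (A.hw j hJ).le
      have := alphaPlus_nonneg A hJ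
      positivity
  calc V A i j₀ ^ 2 ≤ (2 * 2 ^ i * ∑ j ∈ S, y j) ^ 2 := by gcongr
    _ = 4 * 2 ^ i * (2 ^ i * (∑ j ∈ S, y j) ^ 2) := by ring
    _ ≤ 4 * 2 ^ i * (2 ^ i *
        (2 * ∑ j ∈ S, ∑ j' ∈ S.filter (fun j' => arrLE A.r j' j), y j * y j')) := by gcongr
    _ = 8 * 2 ^ i * (2 ^ i * ∑ j ∈ S, ∑ j' ∈ S.filter (fun j' => arrLE A.r j' j), y j * y j') := by
        ring
    _ ≤ 8 * 2 ^ i * B A i := by gcongr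

lemma W_nonneg (j : ℕ) : 0 ≤ W A j :=
  Finset.sum_nonneg fun _ hj' => wrem_nonneg A (arrSet_subset A j (Finset.mem_filter.1 hj').1) _

lemma W_eq_sum_V (j : ℕ) : W A j =
    ∑ i ∈ (A.J.image (cls A.p A.w)).filter (fun i => i < cls A.p A.w j), V A i j := by
  unfold W V
  rw [← Finset.sum_fiberwise_of_maps_to (g := cls A.p A.w)
    (t := (A.J.image (cls A.p A.w)).filter (fun i => i < cls A.p A.w j))]
  · refine Finset.sum_congr rfl fun i hi => Finset.sum_congr ?_ fun _ _ => rfl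
    ext j'
    have := (Finset.mem_filter.1 hi).2
    simp only [Finset.mem_filter]
    constructor
    · rintro ⟨⟨h1, h2⟩, h3⟩; exact ⟨h1, h3⟩
    · rintro ⟨h1, h3⟩; exact ⟨⟨h1, h3 ▸ this⟩, h3⟩
  · intro j' hj'
    obtain ⟨h1, h2⟩ := Finset.mem_filter.1 hj'
    exact Finset.mem_filter.2 ⟨Finset.mem_image_of_mem _ (arrSet_subset A j h1), h2⟩

/-- Cauchy-Schwarz over the lower classes: the weights `(2/3)^(i-i')` are summable, while
`(3/2)^(i-i')` still decays after division by `2^(i-i')`. -/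
lemma W_sq_le (j : ℕ) : W A j ^ 2 ≤ 2 ^ cls A.p A.w j * (16 *
    ∑ i ∈ (A.J.image (cls A.p A.w)).filter (fun i => i < cls A.p A.w j),
      (3 / 4 : ℝ) ^ (cls A.p A.w j - i) * B A i) := by
  set K := (A.J.image (cls A.p A.w)).filter (fun i => i < cls A.p A.w j)
  set n := cls A.p A.w j
  have hlt : ∀ i ∈ K, i < n := fun i hi => (Finset.mem_filter.1 hi).2
  have hgeo : ∑ i ∈ K, (2 / 3 : ℝ) ^ (n - i) ≤ 2 := by
    have := geom_sum_le K (fun i => n - i) (fun a _ b _ h => by simpa using h) (x := 2 / 3)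
      (by norm_num) (by norm_num) 1 (fun i hi => by have := hlt i hi; omega)
    norm_num at this
    exact this
  rw [W_eq_sum_V]
  have hcs : (∑ i ∈ K, V A i j) ^ 2 ≤ (∑ i ∈ K, (2 / 3 : ℝ) ^ (n - i)) *
      ∑ i ∈ K, (3 / 2 : ℝ) ^ (n - i) * V A i j ^ 2 := by
    refine Finset.sum_sq_le_sum_mul_sum_of_sq_le_mul K (fun i _ => by positivity)
      (fun i _ => by positivity) fun i _ => le_of_eq ?_
    rw [← mul_assoc, ← mul_zpow]
    norm_num
  have hg : ∑ i ∈ K, (3 / 2 : ℝ) ^ (n - i) * V A i j ^ 2 ≤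
      8 * 2 ^ n * ∑ i ∈ K, (3 / 4 : ℝ) ^ (n - i) * B A i := by
    rw [Finset.mul_sum]
    refine Finset.sum_le_sum fun i _ => ?_
    have h34 : (3 / 2 : ℝ) ^ (n - i) * 2 ^ i = 2 ^ n * (3 / 4) ^ (n - i) := by
      have h32 : (3 / 2 : ℝ) = 2 * (3 / 4) := by norm_num
      have h2n : (2 : ℝ) ^ n = 2 ^ (n - i) * 2 ^ i := by
        rw [← zpow_add₀ (by norm_num)]; congr 1; ring
      rw [h32, mul_zpow, h2n]; ring
    calc (3 / 2 : ℝ) ^ (n - i) * V A i j ^ 2 ≤ (3 / 2 : ℝ) ^ (n - i) * (8 * 2 ^ i * B A i) := by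
          gcongr; exact V_sq_le A i j
      _ = 8 * ((3 / 2 : ℝ) ^ (n - i) * 2 ^ i) * B A i := by ring
      _ = _ := by rw [h34]; ring
  calc _ ≤ _ := hcs
    _ ≤ 2 * (8 * 2 ^ n * ∑ i ∈ K, (3 / 4 : ℝ) ^ (n - i) * B A i) := by
        refine mul_le_mul hgeo hg (Finset.sum_nonneg fun _ _ => by positivity) (by norm_num)
    _ = _ := by ring

/-! ### First jobs of the buckets of `T⁻` -/

/-- The set `J₁⁻` of jobs that are first in their bucket of table `T⁻`. -/
def J1 : Finset ℕ := (Jminus A.J A.r A.p A.w A.sched A.Jimm A.ε).filter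
  (fun j => rankMinus A.J A.r A.p A.w A.sched A.Jimm A.ε j = 1)

lemma bucketMinus_injOn : Set.InjOn (bucketMinus A.J A.r A.p A.w A.sched A.Jimm) (J1 A) := by
  have key : ∀ a ∈ J1 A, ∀ b ∈ J1 A, bucketMinus A.J A.r A.p A.w A.sched A.Jimm a =
      bucketMinus A.J A.r A.p A.w A.sched A.Jimm b → arrLE A.r a b → a = b := by
    intro a ha b hb hab hle
    obtain ⟨haJ, -⟩ := Finset.mem_filter.1 ha
    obtain ⟨hbJ, hb1⟩ := Finset.mem_filter.1 hb
    exact Finset.card_le_one.1 hb1.le a (Finset.mem_filter.2 ⟨haJ, hab, hle⟩) b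
      (Finset.mem_filter.2 ⟨hbJ, rfl, Or.inr ⟨rfl, le_rfl⟩⟩)
  intro a ha b hb hab
  have : arrLE A.r a b ∨ arrLE A.r b a := by unfold arrLE; omega
  rcases this with h | h
  · exact key a ha b hb hab h
  · exact (key b hb a ha hab.symm h).symm

/-- The first jobs of one density class `i`: their buckets are indexed by
`(⌊α_j⁻⌋₂, ⌊p_j⌋₂)`, and the two geometric series are dominated by their largest terms. -/
lemma sum_class_le (i : ℤ) (M : ℝ)
    (hM : ∀ j ∈ (J1 A).filter (fun j => cls A.p A.w j = i), W A j ≤ M) (hM0 : 0 ≤ M) :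
    ∑ j ∈ (J1 A).filter (fun j => cls A.p A.w j = i),
      alphaMinus A.J A.r A.p A.w A.sched A.Jimm j ≤ 16 * A.ε * (M ^ 2 / 2 ^ i) := by
  set S := (J1 A).filter (fun j => cls A.p A.w j = i)
  have hε := A.hε
  rcases hM0.eq_or_lt with rfl | hMpos
  · refine le_trans (Finset.sum_nonpos fun j hj => ?_) (by positivity)
    exact mul_nonpos_of_nonneg_of_nonpos (Nat.cast_nonneg _) (hM j hj)
  set al : ℕ → ℝ := alphaMinus A.J A.r A.p A.w A.sched A.Jimm
  have hal : ∀ j, al j = A.p j * W A j := fun _ => rfl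
  set a : ℕ → ℤ := fun j => Int.log 2 (al j)
  set q : ℕ → ℤ := fun j => Int.log 2 (A.p j : ℝ)
  set m := Int.log 2 M
  set Q := Int.log 2 (A.ε * M / 2 ^ i)
  have hJ1 : ∀ j ∈ S, j ∈ J1 A := fun j hj => (Finset.mem_filter.1 hj).1
  have hcls : ∀ j ∈ S, cls A.p A.w j = i := fun j hj => (Finset.mem_filter.1 hj).2
  have hJm : ∀ j ∈ S, j ∈ Jminus A.J A.r A.p A.w A.sched A.Jimm A.ε := fun j hj =>
    (Finset.mem_filter.1 (hJ1 j hj)).1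
  have hJ : ∀ j ∈ S, j ∈ A.J := fun j hj => (Finset.mem_filter.1 (hJm j hj)).1
  have hgt : ∀ j ∈ S, A.w j * A.p j / A.ε < al j := fun j hj => (Finset.mem_filter.1 (hJm j hj)).2
  have hp : ∀ j ∈ S, (0 : ℝ) < A.p j := fun j hj => Nat.cast_pos.2 (A.hp j (hJ j hj))
  have hapos : ∀ j ∈ S, 0 < al j := fun j hj => lt_trans
    (div_pos (mul_pos (A.hw j (hJ j hj)) (hp j hj)) hε) (hgt j hj)
  have hMm : (2 : ℝ) ^ m ≤ M := by
    simpa using Int.zpow_log_le_self (b := 2) (by norm_num) hMpos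
  have hQpos : 0 < A.ε * M / 2 ^ i := by positivity
  have hQ : (2 : ℝ) ^ Q ≤ A.ε * M / 2 ^ i := by
    simpa using Int.zpow_log_le_self (b := 2) (by norm_num) hQpos
  have hqQ : ∀ j ∈ S, q j ≤ Q := by
    intro j hj
    -- membership in `J⁻` gives `w_j < ε M`, and `2^i p_j ≤ ρ_j p_j = w_j`
    apply Int.log_mono_right (hp j hj)
    have h1 : A.w j * A.p j / A.ε < A.p j * M := (hgt j hj).trans_le (by
      rw [hal]; exact mul_le_mul_of_nonneg_left (hM j hj) (hp j hj).le)
    rw [div_lt_iff₀ hε] at h1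
    have h2 : A.w j < A.ε * M := by
      have := hp j hj
      by_contra! hc
      nlinarith
    have hd := two_zpow_cls_le A (hJ j hj)
    rw [hcls j hj] at hd
    rw [le_div_iff₀ (by positivity)]
    have := den_mul_p A (hJ j hj)
    nlinarith [hp j hj]
  have hlog : ∀ x : ℝ, x ≤ 2 * 2 ^ Int.log 2 x := by
    intro x
    have := Int.lt_zpow_succ_log_self (b := 2) (by norm_num) x
    rw [zpow_add_one₀ (by norm_num)] at this
    simp only [Nat.cast_ofNat] at this
    linarith
  have haq : ∀ j ∈ S, a j ≤ q j + m + 1 := by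
    intro j hj
    have h1 : (2 : ℝ) ^ a j ≤ al j := by
      simpa using Int.zpow_log_le_self (b := 2) (by norm_num) (hapos j hj)
    have h2 : al j ≤ A.p j * M := by
      rw [hal]; exact mul_le_mul_of_nonneg_left (hM j hj) (hp j hj).le
    have h3 : (A.p j : ℝ) < 2 ^ (q j + 1) := by
      have := Int.lt_zpow_succ_log_self (b := 2) (by norm_num) (A.p j : ℝ)
      rwa [Nat.cast_ofNat] at this
    have h4 : M < 2 ^ (m + 1) := by
      simpa using Int.lt_zpow_succ_log_self (b := 2) (by norm_num) M
    have h5 : (2 : ℝ) ^ a j < 2 ^ (q j + 1 + (m + 1)) := by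
      rw [zpow_add₀ (by norm_num)]
      exact (h1.trans h2).trans_lt (mul_lt_mul'' h3 h4 (hp j hj).le hM0)
    have := (zpow_lt_zpow_iff_right₀ (by norm_num : (1 : ℝ) < 2)).1 h5
    omega
  have hfib : ∑ j ∈ S, (2 : ℝ) ^ a j ≤ ∑ n ∈ S.image q, 2 * 2 ^ (n + m + 1) := by
    rw [← Finset.sum_fiberwise_of_maps_to (g := q) fun j hj => Finset.mem_image_of_mem q hj]
    refine Finset.sum_le_sum fun n _ => two_zpow_sum_le _ _ ?_ _ ?_
    · intro x hx y hy hxy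
      obtain ⟨hx, hxq⟩ := Finset.mem_filter.1 hx
      obtain ⟨hy, hyq⟩ := Finset.mem_filter.1 hy
      refine bucketMinus_injOn A (hJ1 x hx) (hJ1 y hy) ?_
      exact Prod.ext hxy (Prod.ext ((hcls x hx).trans (hcls y hy).symm) (hxq.trans hyq.symm))
    · intro j hj
      obtain ⟨hjS, hjn⟩ := Finset.mem_filter.1 hj
      exact hjn ▸ haq j hjS
  have hout : ∑ n ∈ S.image q, (2 : ℝ) ^ n ≤ 2 * 2 ^ Q := by
    refine two_zpow_sum_le _ (fun n => n) (fun _ _ _ _ h => h) Q fun n hn => ?_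
    obtain ⟨j, hj, rfl⟩ := Finset.mem_image.1 hn
    exact hqQ j hj
  calc ∑ j ∈ S, al j ≤ ∑ j ∈ S, 2 * (2 : ℝ) ^ a j := Finset.sum_le_sum fun j _ => hlog _
    _ = 2 * ∑ j ∈ S, (2 : ℝ) ^ a j := (Finset.mul_sum _ _ _).symm
    _ ≤ 2 * ∑ n ∈ S.image q, 2 * 2 ^ (n + m + 1) := by gcongr
    _ = 8 * 2 ^ m * ∑ n ∈ S.image q, (2 : ℝ) ^ n := by
        rw [Finset.mul_sum, Finset.mul_sum]
        refine Finset.sum_congr rfl fun n _ => ?_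
        rw [zpow_add_one₀ (by norm_num), zpow_add₀ (by norm_num)]; ring
    _ ≤ 8 * M * (2 * (A.ε * M / 2 ^ i)) := by gcongr; linarith
    _ = 16 * A.ε * (M ^ 2 / 2 ^ i) := by ring

/-- The bound for one density class in terms of the `B i'`, obtained by applying `sum_class_le`
with `M` the largest value of `W` in the class. -/
lemma sum_class_le_B (i : ℤ) :
    ∑ j ∈ (J1 A).filter (fun j => cls A.p A.w j = i),
      alphaMinus A.J A.r A.p A.w A.sched A.Jimm j ≤ 256 * A.ε *
    ∑ i' ∈ (A.J.image (cls A.p A.w)).filter (fun i' => i' < i),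
      (3 / 4 : ℝ) ^ (i - i') * B A i' := by
  have hε := A.hε
  rcases ((J1 A).filter (fun j => cls A.p A.w j = i)).eq_empty_or_nonempty with h | h
  · rw [h, Finset.sum_empty]
    have : ∀ i', 0 ≤ B A i' := B_nonneg A
    exact mul_nonneg (by positivity) (Finset.sum_nonneg fun i' _ =>
      mul_nonneg (by positivity) (this i'))
  · obtain ⟨j₀, hj₀, hmax⟩ := Finset.exists_max_image _ (W A) h
    refine (sum_class_le A i (W A j₀) hmax (W_nonneg A j₀)).trans ?_
    have hc := (Finset.mem_filter.1 hj₀).2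
    have hW := W_sq_le A j₀
    rw [hc] at hW
    have h2 : W A j₀ ^ 2 / 2 ^ i ≤ 16 *
        ∑ i' ∈ (A.J.image (cls A.p A.w)).filter (fun i' => i' < i),
          (3 / 4 : ℝ) ^ (i - i') * B A i' := by
      rw [div_le_iff₀ (by positivity), mul_comm]
      exact hW
    calc _ ≤ 16 * A.ε * (16 * _) := by gcongr
      _ = _ := by ring

end

/-- If `J₁⁻` is the set of jobs of `J⁻` that are the first job ever
assigned to their bucket of table `T⁻`, then
`∑_{j∈J₁⁻} α_j⁻ ≤ c·ε·(∑_{j∈J} w_j·p_j + ∑_{j∈J} α_j⁺)` for an absolute constant `c`. -/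
theorem alphaMinus_first_in_bucket_le :
    ∃ c : ℝ, 0 < c ∧ ∀ A : AlgA,
      ∑ j ∈ (Jminus A.J A.r A.p A.w A.sched A.Jimm A.ε).filter
          (fun j => rankMinus A.J A.r A.p A.w A.sched A.Jimm A.ε j = 1),
          alphaMinus A.J A.r A.p A.w A.sched A.Jimm j ≤
        c * A.ε * ((∑ j ∈ A.J, A.w j * A.p j) +
          ∑ j ∈ A.J, alphaPlus A.J A.r A.p A.w A.sched A.Jimm j) := by
  refine ⟨768, by norm_num, fun A => ?_⟩
  have hε := A.hε
  set K := A.J.image (cls A.p A.w) with hK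
  have hmem : ∀ j ∈ A.J, cls A.p A.w j ∈ K := fun j hj => Finset.mem_image_of_mem _ hj
  have hJ : ∀ j ∈ J1 A, j ∈ A.J := fun j hj =>
    (Finset.mem_filter.1 (Finset.mem_filter.1 hj).1).1
  have hgeo : ∀ i' : ℤ, ∑ i ∈ K.filter (fun i => i' < i), (3 / 4 : ℝ) ^ (i - i') ≤ 3 := by
    intro i'
    have := geom_sum_le (K.filter (fun i => i' < i)) (fun i => i - i')
      (fun a _ b _ h => by simpa using h) (x := 3 / 4) (by norm_num) (by norm_num) 1
      (fun i hi => by have := (Finset.mem_filter.1 hi).2; omega)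
    norm_num at this
    exact this
  have hB : ∑ i ∈ K, B A i = (∑ j ∈ A.J, A.w j * A.p j) +
      ∑ j ∈ A.J, alphaPlus A.J A.r A.p A.w A.sched A.Jimm j := by
    rw [← Finset.sum_add_distrib]
    exact Finset.sum_fiberwise_of_maps_to hmem _
  rw [← hB]
  calc _ = ∑ i ∈ K, ∑ j ∈ (J1 A).filter (fun j => cls A.p A.w j = i),
        alphaMinus A.J A.r A.p A.w A.sched A.Jimm j :=
        (Finset.sum_fiberwise_of_maps_to (fun j hj => hmem j (hJ j hj)) _).symm
    _ ≤ ∑ i ∈ K, 256 * A.ε * ∑ i' ∈ K.filter (fun i' => i' < i), (3 / 4 : ℝ) ^ (i - i') * B A i' :=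
        Finset.sum_le_sum fun i _ => sum_class_le_B A i
    _ = 256 * A.ε * ∑ i' ∈ K, (∑ i ∈ K.filter (fun i => i' < i), (3 / 4 : ℝ) ^ (i - i')) * B A i' := by
        rw [← Finset.mul_sum]
        congr 1
        simp only [Finset.sum_mul, Finset.sum_filter]
        rw [Finset.sum_comm]
        simp only [ite_mul, zero_mul]
    _ ≤ 256 * A.ε * ∑ i' ∈ K, 3 * B A i' := by
        gcongr with i' _
        · exact B_nonneg A i'
        · exact hgeo i'
    _ = 768 * A.ε * ∑ i ∈ K, B A i := by rw [← Finset.mul_sum]; ring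
end NPSched
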